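/- Let R be the quotient of ℂ⟨e1,e2,e3⟩ by the two-sided ideal generated by e1e2 − e2e1, e1e3 − e3e1, e2e3 − e3e2, e2², and 2e3² − e1. Then h_0 = 1 and h_n = 2 for every n ≥ 1; equivalently, the Poincaré series Σ_{n≥0} h_n z^n equals (1+z)/(1−z). -/

import Mathlib

open CategoryTheory FreeAlgebra

/-- `Ext^m_R(ℂ,ℂ)` as a ℂ-module, where `ℂ` is an `R`-module via the augmentation `ε`. -/
noncomputable def extC (R : Type) [Ring R] [Algebra ℂ R] (ε : R →ₐ[ℂ] ℂ) (m : ℕ) :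
    ModuleCat ℂ :=
  letI : Module R ℂ := Module.compHom ℂ ε.toRingHom
  ((Ext ℂ (ModuleCat R) m).obj (Opposite.op (ModuleCat.of R ℂ))).obj (ModuleCat.of R ℂ)

/-- `h_m = dim_ℂ Ext^m_R(ℂ,ℂ)`. -/
noncomputable def extDim (R : Type) [Ring R] [Algebra ℂ R] (ε : R →ₐ[ℂ] ℂ) (m : ℕ) : ℕ :=
  Module.finrank ℂ (extC R ε m)

/-- Relations: `e1e2 - e2e1 = 0`, `e1e3 - e3e1 = 0`, `e2e3 - e3e2 = 0`, `e2² = 0`, `2e3² = e1`. -/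
inductive CRel : FreeAlgebra ℂ (Fin 3) → FreeAlgebra ℂ (Fin 3) → Prop
  | r12 : CRel (ι ℂ 0 * ι ℂ 1 - ι ℂ 1 * ι ℂ 0) 0
  | r13 : CRel (ι ℂ 0 * ι ℂ 2 - ι ℂ 2 * ι ℂ 0) 0
  | r23 : CRel (ι ℂ 1 * ι ℂ 2 - ι ℂ 2 * ι ℂ 1) 0
  | r22 : CRel (ι ℂ 1 * ι ℂ 1) 0
  | r33 : CRel ((2 : ℂ) • (ι ℂ 2 * ι ℂ 2)) (ι ℂ 0)

/-!
The relation `2e₃² = e₁` eliminates `e₁`, so `R` is the algebra `ℂ[t][y]/(y²)` of dual numbers over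
a polynomial ring, with `t = e₃` and `y = e₂`. The Koszul resolution of `ℂ` over `ℂ[t]` and the
periodic resolution of `ℂ` over `ℂ[y]/(y²)` tensor to a free resolution of `ℂ` over `R` of ranks
`1, 2, 2, …`. The augmentation kills every entry of its differentials, so they vanish after applying
`Hom(-, ℂ)` and the dimensions of `Ext` are the ranks.
-/

namespace Betti

open Polynomial

section Resolution

variable {C : Type*} [Category* C] [Abelian C]

/-- A complex of projectives that is exact in positive degrees, together with an augmentation
`π` identifying its zeroth homology with `Z`, as a projective resolution of `Z`. -/
noncomputable def projectiveResolutionOfExact (K : ChainComplex C ℕ) {Z : C}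
    [∀ n, Projective (K.X n)] (exact_K : ∀ n, K.ExactAt (n + 1)) (π : K.X 0 ⟶ Z) [Epi π]
    (d_comp_π : K.d 1 0 ≫ π = 0) (exact_π : (ShortComplex.mk _ _ d_comp_π).Exact) :
    ProjectiveResolution Z where
  complex := K
  π := (ChainComplex.toSingle₀Equiv K Z).symm ⟨π, d_comp_π⟩
  quasiIso := ⟨fun n => by
    cases n with
    | zero =>
      rw [ChainComplex.quasiIsoAt₀_iff, ShortComplex.quasiIso_iff_of_zeros' _
        (K.shape _ _ (by simp)) rfl rfl]
      simp only [HomologicalComplex.shortComplexFunctor'_map_τ₂,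
        ChainComplex.toSingle₀Equiv_symm_apply_f_zero]
      exact ⟨exact_π, ‹Epi π›⟩
    | succ n =>
      rw [quasiIsoAt_iff_exactAt' (hL := ChainComplex.exactAt_succ_single_obj ..)]
      exact exact_K n⟩

variable {k : Type*} [Ring k] [Linear k C] [EnoughProjectives C]

/-- If the resolution `P` of `X` is minimal relative to `Y`, meaning that its differentials become
zero after applying `Hom(-, Y)`, then `Ext^n(X, Y)` is `Hom(P_n, Y)`. -/
noncomputable def extIsoHom {X Y : C} (P : ProjectiveResolution X)
    (hP : ∀ n (f : P.complex.X n ⟶ Y), P.complex.d (n + 1) n ≫ f = 0) (n : ℕ) :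
    ((Ext k C n).obj (Opposite.op X)).obj Y ≅ ModuleCat.of k (P.complex.X n ⟶ Y) :=
  have d_eq_zero (i j : ℕ) : (P.complex.linearYonedaObj k Y).d i j = 0 := by
    by_cases hij : i + 1 = j
    · subst hij
      exact ModuleCat.hom_ext (LinearMap.ext (hP i))
    · exact HomologicalComplex.shape _ _ _ hij
  P.isoExt n Y ≪≫ (ShortComplex.HomologyData.ofZeros
    ((P.complex.linearYonedaObj k Y).sc n) (d_eq_zero _ _) (d_eq_zero _ _)).left.homologyIso

end Resolution

section FreeResolution

open scoped ModuleCat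

universe u

variable {R : Type u} [Ring R]

lemma comp_toLinearMapRight'_eq_zero {m n N : Type*} [Fintype m] [DecidableEq m] [Finite n]
    [AddCommGroup N] [Module R N] {A : Matrix m n R} (hA : ∀ i j (x : N), A i j • x = 0)
    (f : (n → R) →ₗ[R] N) : f ∘ₗ A.toLinearMapRight' = 0 := by
  classical
  have := Fintype.ofFinite n
  refine LinearMap.pi_ext' fun i => LinearMap.ext_ring ?_
  simp [LinearMap.pi_apply_eq_sum_univ f (A i), hA, Matrix.row]

section Complex

variable {b : ℕ → ℕ} (A : ∀ n, Matrix (Fin (b (n + 1))) (Fin (b n)) R)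
  (hA : ∀ n, A (n + 1) * A n = 0)

/-- The complex `⋯ ⟶ R^{b 1} ⟶ R^{b 0}` of left `R`-modules whose differentials are right
multiplication of row vectors by the matrices `A n`. -/
noncomputable def freeComplex : ChainComplex (ModuleCat.{u} R) ℕ :=
  ChainComplex.of (fun n => ModuleCat.of R (Fin (b n) → R))
    (fun n => ModuleCat.ofHom (A n).toLinearMapRight')
    (fun n => by rw [← ModuleCat.ofHom_comp, ← Matrix.toLinearMapRight'_mul, hA, map_zero]; rfl)

lemma freeComplex_d (n : ℕ) :
    (freeComplex A hA).d (n + 1) n = ModuleCat.ofHom (A n).toLinearMapRight' := by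
  simp [freeComplex]

instance projective_freeComplex_X (n : ℕ) : Projective ((freeComplex A hA).X n) :=
  (IsProjective.iff_projective (Fin (b n) → R)).1 inferInstance

lemma freeComplex_exactAt_succ {n : ℕ}
    (h : Function.Exact (A (n + 1)).toLinearMapRight' (A n).toLinearMapRight') :
    (freeComplex A hA).ExactAt (n + 1) := by
  rw [HomologicalComplex.exactAt_iff' _ (n + 2) (n + 1) n (by simp) (by simp),
    ShortComplex.ShortExact.moduleCat_exact_iff_function_exact]
  simpa only [HomologicalComplex.shortComplexFunctor'_obj_f,
    HomologicalComplex.shortComplexFunctor'_obj_g, freeComplex_d] using! h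

end Complex

variable {k : Type*} [Field k] [Algebra k R]

lemma finrank_hom_pi_eq (b : ℕ) (N : ModuleCat.{u} R) [Module.Finite k N] :
    Module.finrank k (ModuleCat.of R (Fin b → R) ⟶ N) = b * Module.finrank k N := by
  have e : (ModuleCat.of R (Fin b → R) ⟶ N) ≃ₗ[k] (Fin b → N) :=
    ModuleCat.homLinearEquiv ≪≫ₗ ((Pi.basisFun R (Fin b)).constr k).symm
  rw [e.finrank_eq, Module.finrank_pi_fintype]
  simp

theorem finrank_ext_eq_of_minimal_free_resolution {M N : ModuleCat.{u} R} [Module.Finite k N]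
    {b : ℕ → ℕ} (A : ∀ n, Matrix (Fin (b (n + 1))) (Fin (b n)) R)
    (exact_A : ∀ n, Function.Exact (A (n + 1)).toLinearMapRight' (A n).toLinearMapRight')
    (π : (Fin (b 0) → R) →ₗ[R] M) (exact_π : Function.Exact (A 0).toLinearMapRight' π)
    (surjective_π : Function.Surjective π) (minimal : ∀ n i j (x : N), A n i j • x = 0) (n : ℕ) :
    Module.finrank k (((Ext k (ModuleCat R) n).obj (Opposite.op M)).obj N) =
      b n * Module.finrank k N := by
  have hA (n : ℕ) : A (n + 1) * A n = 0 := Matrix.toLinearMapRight'.injective <| by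
    rw [Matrix.toLinearMapRight'_mul, (exact_A n).linearMap_comp_eq_zero, map_zero]
  let πHom : (freeComplex A hA).X 0 ⟶ M := ModuleCat.ofHom π
  have epi_πHom : Epi πHom := (ModuleCat.epi_iff_surjective _).2 surjective_π
  have d_comp_πHom : (freeComplex A hA).d 1 0 ≫ πHom = 0 := by
    rw [freeComplex_d]
    exact ModuleCat.hom_ext exact_π.linearMap_comp_eq_zero
  let P : ProjectiveResolution M := projectiveResolutionOfExact (freeComplex A hA)
    (fun n => freeComplex_exactAt_succ A hA (exact_A n)) πHom d_comp_πHom <| by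
      rw [ShortComplex.ShortExact.moduleCat_exact_iff_function_exact]
      simpa only [freeComplex_d] using! exact_π
  have minimal_P (n : ℕ) (f : P.complex.X n ⟶ N) : P.complex.d (n + 1) n ≫ f = 0 := by
    change (freeComplex A hA).d (n + 1) n ≫ f = 0
    rw [freeComplex_d]
    exact ModuleCat.hom_ext (comp_toLinearMapRight'_eq_zero (minimal n) f.hom)
  rw [(extIsoHom P minimal_P n).toLinearEquiv.finrank_eq]
  exact finrank_hom_pi_eq (b n) N

end FreeResolution

section Augmentation

open scoped ModuleCat

universe u

variable {k R : Type u} [Field k] [Ring R] [Algebra k R] (ε : R →ₐ[k] k)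

/-- The `R`-module `k` on which `R` acts through the augmentation `ε`. -/
noncomputable def augmentationModule : ModuleCat.{u} R :=
  letI : Module R k := Module.compHom k ε.toRingHom
  ModuleCat.of R k

/-- The identity of `k`, comparing the `k`-structure that `augmentationModule ε` inherits from `R`
with the standard one. -/
def augmentationModuleEquiv : augmentationModule ε ≃ₗ[k] k where
  __ := AddEquiv.refl k
  map_smul' c x := congrArg (fun a : k => a * (show k from x)) (ε.commutes c)

lemma augmentationModuleEquiv_smul (r : R) (x : augmentationModule ε) :
    augmentationModuleEquiv ε (r • x) = ε r * augmentationModuleEquiv ε x :=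
  rfl

lemma finrank_augmentationModule : Module.finrank k (augmentationModule ε) = 1 :=
  (augmentationModuleEquiv ε).finrank_eq.trans (Module.finrank_self k)

instance finite_augmentationModule : Module.Finite k (augmentationModule ε) :=
  .equiv (augmentationModuleEquiv ε).symm

/-- The augmentation `ε`, as an `R`-linear map from the free module of rank one. -/
noncomputable def augmentationMap : (Fin 1 → R) →ₗ[R] augmentationModule ε :=
  LinearMap.toSpanSingleton R _ ((augmentationModuleEquiv ε).symm 1) ∘ₗ LinearMap.proj 0

lemma augmentationModuleEquiv_augmentationMap (x : Fin 1 → R) :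
    augmentationModuleEquiv ε (augmentationMap ε x) = ε (x 0) := by
  simp [augmentationMap, augmentationModuleEquiv_smul]

lemma augmentationMap_eq_zero_iff (x : Fin 1 → R) : augmentationMap ε x = 0 ↔ ε (x 0) = 0 := by
  rw [← augmentationModuleEquiv_augmentationMap, LinearEquiv.map_eq_zero_iff]

lemma augmentationMap_surjective : Function.Surjective (augmentationMap ε) := by
  intro x
  refine ⟨fun _ => algebraMap k R (augmentationModuleEquiv ε x), ?_⟩
  apply (augmentationModuleEquiv ε).injective
  rw [augmentationModuleEquiv_augmentationMap, AlgHom.commutes, Algebra.algebraMap_self_apply]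

end Augmentation

/-- Commuting elements `y`, `t` of an augmented algebra that generate the augmentation ideal as a
left ideal, where `t` is a nonzerodivisor and the left annihilator of `y` is `R y`. The model is
`k[t] ⊗ k[y]/(y²)`. -/
structure IsTatePair {k R : Type*} [CommRing k] [Ring R] [Algebra k R] (ε : R →ₐ[k] k)
    (y t : R) : Prop where
  commute : Commute y t
  isRightRegular : IsRightRegular t
  mul_eq_zero_iff (x : R) : x * y = 0 ↔ ∃ z, x = z * y
  map_eq_zero_iff (x : R) : ε x = 0 ↔ ∃ u v, x = u * y + v * t

/-- The ranks of the free modules in the Tate resolution. -/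
def tateRank : ℕ → ℕ
  | 0 => 1
  | _ + 1 => 2

/-- The differentials of the Tate resolution: the total complex of the Koszul resolution
`R ⟶ R` given by `t` and the periodic resolution `⋯ ⟶ R ⟶ R` given by `y`. -/
def tateMatrix {R : Type*} [Ring R] (y t : R) :
    ∀ n, Matrix (Fin (tateRank (n + 1))) (Fin (tateRank n)) R
  | 0 => !![y; t]
  | _ + 1 => !![y, 0; t, -y]

namespace IsTatePair

universe u

section Exactness

variable {k R : Type*} [CommRing k] [Ring R] [Algebra k R] {ε : R →ₐ[k] k} {y t : R}

lemma mul_self_eq_zero (h : IsTatePair ε y t) : y * y = 0 :=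
  (h.mul_eq_zero_iff y).2 ⟨1, (one_mul y).symm⟩

lemma mul_left_eq_zero_of_add_eq_zero (h : IsTatePair ε y t) {u v : R}
    (huv : u * y + v * t = 0) : v * y = 0 :=
  h.isRightRegular <| calc
    v * y * t = (u * y + v * t) * y := by
      rw [add_mul, mul_assoc u, h.mul_self_eq_zero, mul_zero, zero_add, mul_assoc, mul_assoc,
        h.commute.eq]
    _ = 0 * t := by rw [huv, zero_mul, zero_mul]

lemma add_eq_zero_iff (h : IsTatePair ε y t) (u v : R) :
    u * y + v * t = 0 ↔ ∃ p q, u = p * y + q * t ∧ v = -(q * y) := by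
  constructor
  · intro huv
    obtain ⟨z, rfl⟩ := (h.mul_eq_zero_iff v).1 (h.mul_left_eq_zero_of_add_eq_zero huv)
    have hu : (u + z * t) * y = 0 := by rw [add_mul, mul_assoc z, ← h.commute.eq, ← mul_assoc, huv]
    obtain ⟨p, hp⟩ := (h.mul_eq_zero_iff _).1 hu
    exact ⟨p, -z, by rw [← hp]; noncomm_ring, by noncomm_ring⟩
  · rintro ⟨p, q, rfl, rfl⟩
    rw [add_mul, neg_mul, mul_assoc, h.mul_self_eq_zero, mul_assoc, mul_assoc, h.commute.eq,
      mul_zero, zero_add, add_neg_cancel]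

lemma mem_range_square_iff (h : IsTatePair ε y t) (x : Fin 2 → R) :
    x ∈ Set.range (!![y, 0; t, -y]).toLinearMapRight' ↔ x 0 * y + x 1 * t = 0 := by
  rw [h.add_eq_zero_iff]
  constructor
  · rintro ⟨w, rfl⟩
    exact ⟨w 0, w 1, by simp [Matrix.vecMul, dotProduct], by simp [Matrix.vecMul, dotProduct]⟩
  · rintro ⟨p, q, hp, hq⟩
    exact ⟨![p, q], by ext i; fin_cases i <;> simp [hp, hq]⟩

lemma exact_square_column (h : IsTatePair ε y t) :
    Function.Exact (!![y, 0; t, -y]).toLinearMapRight' (!![y; t]).toLinearMapRight' := by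
  intro x
  rw [h.mem_range_square_iff]
  simp [funext_iff, Matrix.vecHead, Matrix.vecTail]

lemma exact_square_square (h : IsTatePair ε y t) :
    Function.Exact (!![y, 0; t, -y]).toLinearMapRight' (!![y, 0; t, -y]).toLinearMapRight' := by
  intro x
  rw [h.mem_range_square_iff]
  simpa [funext_iff, Fin.forall_fin_two, Matrix.vecHead, Matrix.vecTail] using
    h.mul_left_eq_zero_of_add_eq_zero

lemma exact_tateMatrix (h : IsTatePair ε y t) :
    ∀ n, Function.Exact (tateMatrix y t (n + 1)).toLinearMapRight'
      (tateMatrix y t n).toLinearMapRight'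
  | 0 => h.exact_square_column
  | _ + 1 => h.exact_square_square

lemma map_left_eq_zero (h : IsTatePair ε y t) : ε y = 0 :=
  (h.map_eq_zero_iff y).2 ⟨1, 0, by simp⟩

lemma map_right_eq_zero (h : IsTatePair ε y t) : ε t = 0 :=
  (h.map_eq_zero_iff t).2 ⟨0, 1, by simp⟩

lemma map_tateMatrix_eq_zero (h : IsTatePair ε y t) (n : ℕ) :
    ∀ i j, ε (tateMatrix y t n i j) = 0 := by
  have column : ∀ (i : Fin 2) (j : Fin 1), ε (!![y; t] i j) = 0 := by
    simp [Fin.forall_fin_two, h.map_left_eq_zero, h.map_right_eq_zero]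
  have square : ∀ i j : Fin 2, ε (!![y, 0; t, -y] i j) = 0 := by
    simp [Fin.forall_fin_two, h.map_left_eq_zero, h.map_right_eq_zero]
  cases n with
  | zero => exact column
  | succ n => exact square

lemma comp_algEquiv {S : Type*} [Ring S] [Algebra k S] (h : IsTatePair ε y t) (e : S ≃ₐ[k] R) :
    IsTatePair (ε.comp e) (e.symm y) (e.symm t) where
  commute := h.commute.map e.symm
  isRightRegular a b hab := e.injective <| h.isRightRegular <| by simpa using congrArg e hab
  mul_eq_zero_iff x := by
    rw [← EmbeddingLike.map_eq_zero_iff (f := e), map_mul, e.apply_symm_apply, h.mul_eq_zero_iff,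
      e.symm.surjective.exists]
    simp only [← map_mul, e.eq_symm_apply]
  map_eq_zero_iff x := by
    simp only [AlgHom.comp_apply, AlgEquiv.coe_toAlgHom, h.map_eq_zero_iff,
      e.symm.surjective.exists, ← map_mul, ← map_add, e.eq_symm_apply]

end Exactness

lemma exact_column_augmentationMap {k R : Type u} [Field k] [Ring R] [Algebra k R]
    {ε : R →ₐ[k] k} {y t : R} (h : IsTatePair ε y t) :
    Function.Exact (!![y; t]).toLinearMapRight' (augmentationMap ε) := by
  intro x
  rw [augmentationMap_eq_zero_iff, h.map_eq_zero_iff]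
  constructor
  · rintro ⟨u, v, hx⟩
    exact ⟨![u, v], by ext i; fin_cases i; simp [Matrix.vecMul, dotProduct, hx]⟩
  · rintro ⟨w, rfl⟩
    exact ⟨w 0, w 1, by simp [Matrix.vecMul, dotProduct]⟩

theorem extDim_eq {R : Type} [Ring R] [Algebra ℂ R] {ε : R →ₐ[ℂ] ℂ} {y t : R}
    (h : IsTatePair ε y t) (n : ℕ) : extDim R ε n = tateRank n := by
  have minimal (n : ℕ) (i j) (x : augmentationModule ε) : tateMatrix y t n i j • x = 0 := by
    apply (augmentationModuleEquiv ε).injective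
    rw [augmentationModuleEquiv_smul, h.map_tateMatrix_eq_zero, zero_mul, map_zero]
  have finrank_eq := finrank_ext_eq_of_minimal_free_resolution (k := ℂ) (tateMatrix y t)
    h.exact_tateMatrix (augmentationMap ε) h.exact_column_augmentationMap
    (augmentationMap_surjective ε) minimal n
  rwa [finrank_augmentationModule, mul_one] at finrank_eq

end IsTatePair

section DualNumber

lemma isTatePair_dualNumber {k A : Type*} [CommRing k] [CommRing A] [Algebra k A]
    {α : A →ₐ[k] k} {a : A} (ha : IsRegular a) (hα : ∀ x, α x = 0 ↔ a ∣ x) :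
    IsTatePair (α.comp (TrivSqZeroExt.fstHom k A A)) DualNumber.eps (TrivSqZeroExt.inl a) where
  commute := DualNumber.commute_eps_left _
  isRightRegular := by
    intro x x' h
    ext
    · exact ha.right (by simpa using congrArg TrivSqZeroExt.fst h)
    · exact ha.right (by simpa using congrArg TrivSqZeroExt.snd h)
  mul_eq_zero_iff x := by
    constructor
    · intro hx
      have hx₀ : x.fst = 0 := by simpa using congrArg TrivSqZeroExt.snd hx
      exact ⟨TrivSqZeroExt.inl x.snd, by ext <;> simp [hx₀]⟩
    · rintro ⟨z, rfl⟩
      rw [mul_assoc, DualNumber.eps_mul_eps, mul_zero]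
  map_eq_zero_iff x := by
    rw [AlgHom.comp_apply, hα]
    constructor
    · rintro ⟨c, hc⟩
      exact ⟨TrivSqZeroExt.inl x.snd, TrivSqZeroExt.inl c, by
        ext
        · simpa [mul_comm c] using hc
        · simp⟩
    · rintro ⟨u, v, rfl⟩
      exact ⟨v.fst, by simp [mul_comm a]⟩

end DualNumber

section Presentation

/-- The generator `e_{i+1}` of the algebra presented by `CRel`. -/
noncomputable abbrev gen (i : Fin 3) : RingQuot CRel := RingQuot.mkAlgHom ℂ CRel (ι ℂ i)

lemma gen_one_mul_self : gen 1 * gen 1 = 0 := by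
  simpa using RingQuot.mkAlgHom_rel ℂ CRel.r22

lemma commute_gen_one_gen_two : Commute (gen 1) (gen 2) := by
  simpa [sub_eq_zero] using! RingQuot.mkAlgHom_rel ℂ CRel.r23

lemma gen_zero_eq : gen 0 = (2 : ℂ) • (gen 2 * gen 2) := by
  simpa using (RingQuot.mkAlgHom_rel ℂ CRel.r33).symm

/-- The map `R ⟶ ℂ[X][ε]`, `e₁ ↦ 2X²`, `e₂ ↦ ε`, `e₃ ↦ X`, from the presented algebra to the dual
numbers over `ℂ[X]`. -/
noncomputable def toDualNumber : RingQuot CRel →ₐ[ℂ] DualNumber ℂ[X] :=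
  RingQuot.liftAlgHom ℂ ⟨FreeAlgebra.lift ℂ
    ![TrivSqZeroExt.inl ((2 : ℂ) • (X * X)), DualNumber.eps, TrivSqZeroExt.inl X], by
      rintro _ _ (_ | _ | _ | _ | _) <;> ext <;> simp [mul_comm]⟩

/-- The inverse of `toDualNumber`, sending `X` to `e₃` and `ε` to `e₂`. -/
noncomputable def ofDualNumber : DualNumber ℂ[X] →ₐ[ℂ] RingQuot CRel :=
  DualNumber.lift ⟨(aeval (gen 2), gen 1), gen_one_mul_self,
    fun _ => Algebra.commute_of_mem_adjoin_singleton_of_commute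
      (aeval_mem_adjoin_singleton ℂ (gen 2)) commute_gen_one_gen_two⟩

/-- The presented algebra is the algebra of dual numbers over `ℂ[X]`: the relation `2e₃² = e₁`
eliminates `e₁`. -/
noncomputable def dualNumberEquiv : RingQuot CRel ≃ₐ[ℂ] DualNumber ℂ[X] :=
  AlgEquiv.ofAlgHom toDualNumber ofDualNumber
    (by ext <;> simp [toDualNumber, ofDualNumber, monomial_one_right_eq_X_pow])
    (by
      ext i
      fin_cases i <;> simp [toDualNumber, ofDualNumber, gen_zero_eq])

lemma isTatePair_gen {ε : RingQuot CRel →ₐ[ℂ] ℂ} (hε : ∀ i, ε (gen i) = 0) :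
    IsTatePair ε (gen 1) (gen 2) := by
  have X_dvd_iff_aeval_zero (p : ℂ[X]) : aeval (0 : ℂ) p = 0 ↔ X ∣ p := by
    rw [X_dvd_iff, coeff_zero_eq_aeval_zero]
  have ε_eq : ε = ((aeval (0 : ℂ)).comp (TrivSqZeroExt.fstHom ℂ ℂ[X] ℂ[X])).comp
      (dualNumberEquiv : RingQuot CRel →ₐ[ℂ] DualNumber ℂ[X]) := by
    ext i
    fin_cases i <;> simp [hε, dualNumberEquiv, toDualNumber]
  have h := (isTatePair_dualNumber isRegular_X X_dvd_iff_aeval_zero).comp_algEquiv dualNumberEquiv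
  rw [← ε_eq] at h
  convert h
  · simp [dualNumberEquiv, ofDualNumber]
  · simp [dualNumberEquiv, ofDualNumber]

end Presentation

lemma powerSeries_mk_mul_one_sub_X {S : Type*} [Ring S] {h : ℕ → S} (h_zero : h 0 = 1)
    (h_succ : ∀ n, h (n + 1) = 2) :
    PowerSeries.mk h * (1 - PowerSeries.X) = 1 + PowerSeries.X := by
  ext n
  rw [mul_sub, mul_one, map_sub]
  rcases n with _ | _ | n
  · simp [h_zero]
  · norm_num [h_zero, h_succ, PowerSeries.coeff_succ_mul_X, PowerSeries.coeff_one]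
  · simp [h_succ, PowerSeries.coeff_succ_mul_X, PowerSeries.coeff_one, PowerSeries.coeff_X]

end Betti

theorem betti_numbers (ε : RingQuot CRel →ₐ[ℂ] ℂ)
    (hε : ∀ i : Fin 3, ε (RingQuot.mkAlgHom ℂ CRel (ι ℂ i)) = 0) :
    (extDim (RingQuot CRel) ε 0 = 1 ∧ ∀ n ≥ 1, extDim (RingQuot CRel) ε n = 2) ∧
    (PowerSeries.mk fun n => (extDim (RingQuot CRel) ε n : ℚ)) * (1 - PowerSeries.X) =
      1 + PowerSeries.X := by
  have extDim_eq : ∀ n, extDim (RingQuot CRel) ε n = Betti.tateRank n :=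
    (Betti.isTatePair_gen hε).extDim_eq
  have extDim_zero : extDim (RingQuot CRel) ε 0 = 1 := extDim_eq 0
  have extDim_succ (n : ℕ) : extDim (RingQuot CRel) ε (n + 1) = 2 := extDim_eq (n + 1)
  refine ⟨⟨extDim_zero, fun n hn => ?_⟩, Betti.powerSeries_mk_mul_one_sub_X ?_ fun n => ?_⟩
  · obtain ⟨m, rfl⟩ := Nat.exists_eq_add_of_le' hn
    exact extDim_succ m
  · exact_mod_cast extDim_zero
  · exact_mod_cast extDim_succ n
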